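/- Let H be a graph with chromatic number χ(H) = k, let v be a vertex of H with χ(H − v) = k − 1, and let 2 ≤ m < k be an integer. For every real η > 0 there exists d₀ such that for every H-free graph G and every vertex u of G of degree d > d₀, the number of copies of K_m in G that contain u is at most (1 + η)·C(k−2, m−1)·(d/(k−2))^{m−1}. -/

import Mathlib

/-!
Write `r = k - 2` and `s = m - 1`. Copies of `K_m` through `u` correspond to `s`-cliques in the
neighbourhood `N(u)`, a set of `d` vertices. As `G` is `H`-free, the graph induced on `N(u)`
contains no copy of `H - v`, which is `(r + 1)`-colourable.

By the box lemma of Erdős (`exists_box`), `δ * d ^ (r + 1)` ordered `(r + 1)`-cliques in `N(u)`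
would, for `d` large, contain a large complete `(r + 1)`-partite graph and hence a copy of `H - v`. So
the density of ordered `(r + 1)`-cliques in `N(u)` is at most `δ`.

The densities `t_p` of ordered `p`-cliques satisfy the Moon–Moser inequality (`moon_moser`)
`(p + 1) t_{p+1}² ≤ t_p (t_{p+1} + p t_{p+2})`. Starting from `t_{r+1} ≤ δ` and going down, this
yields `t_{p+1} ≤ (r - p) / r * t_p + o(1)` as `δ → 0` (`ratio_bound`), and therefore
`t_s ≤ r (r - 1) ⋯ (r - s + 1) / r ^ s + o(1)` (`density_bound`). Division by `s!` turns this into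
the claimed bound.
-/

open SimpleGraph

/-- `G` is `H`-free: no subgraph of `G` is isomorphic to `H`. -/
def HFree {V W : Type*} (G : SimpleGraph V) (H : SimpleGraph W) : Prop :=
  ∀ F : G.Subgraph, ¬ Nonempty (F.coe ≃g H)

/-! ### Sequences satisfying the Moon–Moser inequality -/

/-- For a sequence obeying the Moon–Moser inequality in density form, smallness of `t (r + 1)`
propagates downwards: `t (p + 1)` exceeds `(r - p) / r * t p` by at most any prescribed error.
Each downward step replaces the error by its square root. -/
lemma ratio_bound (r : ℕ) (hr : 1 ≤ r) : ∀ j p : ℕ, p + j = r → ∀ ε : ℝ, 0 < ε → ∃ δ : ℝ, 0 < δ ∧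
    ∀ t : ℕ → ℝ, (∀ s, 0 ≤ t s) → (∀ s, t s ≤ 1) →
      (∀ p : ℕ, (p + 1) * t (p + 1) ^ 2 ≤ t p * (t (p + 1) + p * t (p + 2))) →
      t (r + 1) ≤ δ → t (p + 1) ≤ (j : ℝ) / r * t p + ε := by
  have hr0 : (0 : ℝ) < r := by exact_mod_cast hr
  intro j
  induction j with
  | zero =>
    rintro p rfl ε hε
    refine ⟨ε, hε, fun t _ _ _ ht => ?_⟩
    simpa using ht
  | succ j ih =>
    intro p hp ε hε
    obtain ⟨δ, hδ, h⟩ := ih (p + 1) (by omega) (ε ^ 2) (by positivity)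
    refine ⟨δ, hδ, fun t t0 t1 hrec ht => ?_⟩
    have h2 := h t t0 t1 hrec ht
    have h3 := hrec p
    have hrp : (r : ℝ) = p + (j + 1) := by exact_mod_cast hp.symm
    have hy0 := t0 p
    have hy1 := t1 p
    have hx0 := t0 (p + 1)
    set x := t (p + 1)
    set y := t p
    have hp1 : (0 : ℝ) < p + 1 := by positivity
    have hA : (0 : ℝ) ≤ ((j + 1 : ℕ) : ℝ) / r * y := by positivity
    have key : x ^ 2 ≤ ((j + 1 : ℕ) : ℝ) / r * y * x + ε ^ 2 := by
      have e1 : y * (x + p * t (p + 1 + 1)) ≤ y * (x + p * ((j : ℝ) / r * x + ε ^ 2)) := by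
        gcongr
      have e2 : y * (x + p * ((j : ℝ) / r * x + ε ^ 2))
          = (p + 1) * (((j + 1 : ℕ) : ℝ) / r * y * x) + p * ε ^ 2 * y := by
        have : (1 : ℝ) + p * (j / r) = (p + 1) * ((j + 1) / r) := by
          field_simp
          rw [hrp]; ring
        push_cast
        linear_combination (y * x) * this
      have e3 : p * ε ^ 2 * y ≤ (p + 1) * ε ^ 2 := by
        nlinarith [mul_nonneg (Nat.cast_nonneg (α := ℝ) p) (sq_nonneg ε), sq_nonneg ε]
      have e4 : (p + 1 : ℝ) * x ^ 2 ≤ (p + 1) * (((j + 1 : ℕ) : ℝ) / r * y * x + ε ^ 2) := by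
        have : t (p + 2) = t (p + 1 + 1) := rfl
        rw [this] at h3
        linarith
      exact le_of_mul_le_mul_left e4 hp1
    -- from `x ^ 2 ≤ A * x + ε ^ 2`: if `x > A + ε` then `x * (x - A) > ε ^ 2`
    by_contra! hcon
    nlinarith

/-- The product of the ratio bounds: `t s` is at most the ordered `s`-clique density
`r (r - 1) ⋯ (r - s + 1) / r ^ s` of the balanced complete `r`-partite graph, up to an error
that vanishes with `t (r + 1)`. -/
lemma density_bound (r : ℕ) (hr : 1 ≤ r) : ∀ s : ℕ, s ≤ r → ∀ ε : ℝ, 0 < ε → ∃ δ : ℝ, 0 < δ ∧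
    ∀ t : ℕ → ℝ, (∀ s, 0 ≤ t s) → (∀ s, t s ≤ 1) →
      (∀ p : ℕ, (p + 1) * t (p + 1) ^ 2 ≤ t p * (t (p + 1) + p * t (p + 2))) →
      t (r + 1) ≤ δ → t s ≤ (r.descFactorial s : ℝ) / r ^ s + ε := by
  have hr0 : (0 : ℝ) < r := by exact_mod_cast hr
  intro s
  induction s with
  | zero =>
    intro _ ε hε
    refine ⟨1, one_pos, fun t _ t1 _ _ => ?_⟩
    have := t1 0
    simp
    linarith
  | succ s ih =>
    intro hs ε hε
    obtain ⟨δ₁, hδ₁, h₁⟩ := ih (by omega) (ε / 2) (by positivity)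
    obtain ⟨δ₂, hδ₂, h₂⟩ := ratio_bound r hr (r - s) s (by omega) (ε / 2) (by positivity)
    refine ⟨min δ₁ δ₂, lt_min hδ₁ hδ₂, fun t t0 t1 hrec ht => ?_⟩
    have a := h₁ t t0 t1 hrec (ht.trans (min_le_left _ _))
    have b := h₂ t t0 t1 hrec (ht.trans (min_le_right _ _))
    have c0 : (0 : ℝ) ≤ ((r - s : ℕ) : ℝ) / r := by positivity
    have c1 : ((r - s : ℕ) : ℝ) / r ≤ 1 := by
      rw [div_le_one hr0]; exact_mod_cast Nat.sub_le r s
    have e : ((r.descFactorial (s + 1) : ℕ) : ℝ) / r ^ (s + 1)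
        = ((r - s : ℕ) : ℝ) / r * ((r.descFactorial s : ℝ) / r ^ s) := by
      rw [Nat.descFactorial_succ, Nat.cast_mul, pow_succ]
      field_simp
    rw [e]
    nlinarith [mul_le_mul_of_nonneg_left a c0]

/-! ### Ordered cliques and the Moon–Moser inequality -/

/-- The entries of the tuple `x` are pairwise adjacent; such a tuple is an ordered clique. -/
def IsCliqueTuple {V : Type*} (G : SimpleGraph V) {s : ℕ} (x : Fin s → V) : Prop :=
  ∀ i j, i ≠ j → G.Adj (x i) (x j)

open Classical in
/-- The ordered `s`-cliques of `G`; every `s`-clique gives rise to `s!` of them. -/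
noncomputable def cliqueTuples {V : Type*} [Fintype V] (G : SimpleGraph V) (s : ℕ) :
    Finset (Fin s → V) := {x | IsCliqueTuple G x}

open Classical in
/-- The number of common neighbours of the entries of `x`. -/
noncomputable def codeg {V : Type*} [Fintype V] (G : SimpleGraph V) {s : ℕ} (x : Fin s → V) : ℕ :=
  Finset.card {b | ∀ i, G.Adj b (x i)}

lemma isCliqueTuple_insertNth {V : Type*} (G : SimpleGraph V) {p : ℕ} (j : Fin (p + 1)) (a : V)
    (x : Fin p → V) : IsCliqueTuple G (j.insertNth (α := fun _ => V) a x) ↔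
      IsCliqueTuple G x ∧ ∀ i, G.Adj a (x i) := by
  constructor
  · intro h
    refine ⟨fun i i' hii => ?_, fun i => ?_⟩
    · simpa using h (j.succAbove i) (j.succAbove i') (by simpa using hii)
    · simpa using h j (j.succAbove i) (Fin.succAbove_ne _ _).symm
  · rintro ⟨h1, h2⟩ i i' hii
    induction i using Fin.succAboveCases j with
    | x =>
      induction i' using Fin.succAboveCases j with
      | x => exact absurd rfl hii
      | p i' => simpa using h2 i'
    | p i =>
      induction i' using Fin.succAboveCases j with
      | x => simpa using (h2 i).symm
      | p i' => simpa using h1 i i' (by rintro rfl; exact hii rfl)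

open Classical in
/-- Deleting the entry at `j` from an ordered `(p + 1)`-clique gives an ordered `p`-clique `x`,
and each `x` arises from as many cliques as its entries have common neighbours. -/
lemma sum_cliqueTuples_succ {V : Type*} [Fintype V] (G : SimpleGraph V) {p : ℕ} (j : Fin (p + 1))
    (f : (Fin p → V) → ℕ) :
    ∑ x ∈ cliqueTuples G (p + 1), f (fun i => x (j.succAbove i)) =
      ∑ x ∈ cliqueTuples G p, codeg G x * f x := by
  rw [cliqueTuples, Finset.sum_filter, ← (Fin.insertNthEquiv (fun _ => V) j).sum_comp,
    Fintype.sum_prod_type, Finset.sum_comm, cliqueTuples, Finset.sum_filter]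
  refine Finset.sum_congr rfl fun x _ => ?_
  simp only [Fin.insertNthEquiv, Equiv.coe_fn_mk, isCliqueTuple_insertNth,
    Fin.insertNth_apply_succAbove]
  by_cases hx : IsCliqueTuple G x
  · simp [hx, codeg, ← Finset.sum_filter]
  · simp [hx]

lemma card_cliqueTuples_succ {V : Type*} [Fintype V] (G : SimpleGraph V) (p : ℕ) :
    (cliqueTuples G (p + 1)).card = ∑ x ∈ cliqueTuples G p, codeg G x := by
  simpa using sum_cliqueTuples_succ G (p := p) 0 (fun _ => 1)

open Classical in
/-- A vertex adjacent to all entries of `x` is counted `p + 1` times on the left, and any other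
vertex at most once, since it can only count for the index of its single non-neighbour. -/
lemma sum_codeg_le {V : Type*} [Fintype V] (G : SimpleGraph V) {p : ℕ} (x : Fin (p + 1) → V) :
    ∑ j : Fin (p + 1), codeg G (fun i => x (j.succAbove i)) ≤ Fintype.card V + p * codeg G x := by
  simp only [codeg, Finset.card_filter]
  rw [Finset.sum_comm, Finset.mul_sum, ← Finset.card_univ, Finset.card_eq_sum_ones,
    ← Finset.sum_add_distrib]
  refine Finset.sum_le_sum fun b _ => ?_
  by_cases hb : ∀ i, G.Adj b (x i)
  · simp [hb, add_comm]
  · rw [if_neg hb, ← Finset.card_filter, mul_zero, add_zero, Finset.card_le_one]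
    push Not at hb
    obtain ⟨i₀, hi₀⟩ := hb
    have : ∀ j : Fin (p + 1), (∀ i, G.Adj b (x (j.succAbove i))) → j = i₀ := by
      intro j hj
      by_contra hne
      obtain ⟨i, rfl⟩ := Fin.exists_succAbove_eq (Ne.symm hne)
      exact hi₀ (hj i)
    intro j hj j' hj'
    simp only [Finset.mem_filter, Finset.mem_univ, true_and] at hj hj'
    exact (this j hj).trans (this j' hj').symm

/-- The **Moon–Moser inequality** for ordered cliques, with all divisions cleared. It comes from
estimating the sum of the squared codegrees of ordered `p`-cliques, from below by Cauchy–Schwarz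
and from above by `sum_codeg_le`. -/
lemma moon_moser {V : Type*} [Fintype V] (G : SimpleGraph V) (p : ℕ) :
    (p + 1) * (cliqueTuples G (p + 1)).card ^ 2 ≤ (cliqueTuples G p).card *
      (Fintype.card V * (cliqueTuples G (p + 1)).card + p * (cliqueTuples G (p + 2)).card) := by
  have h1 : (cliqueTuples G (p + 1)).card ^ 2 ≤
      (cliqueTuples G p).card * ∑ x ∈ cliqueTuples G p, codeg G x ^ 2 := by
    rw [card_cliqueTuples_succ]
    exact sq_sum_le_card_mul_sum_sq
  have h2 : (p + 1) * ∑ x ∈ cliqueTuples G p, codeg G x ^ 2 ≤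
      Fintype.card V * (cliqueTuples G (p + 1)).card + p * (cliqueTuples G (p + 2)).card := by
    calc (p + 1) * ∑ x ∈ cliqueTuples G p, codeg G x ^ 2
        = ∑ j : Fin (p + 1), ∑ x ∈ cliqueTuples G (p + 1),
            codeg G (fun i => x (j.succAbove i)) := by
          simp [sum_cliqueTuples_succ, sq]
      _ = ∑ x ∈ cliqueTuples G (p + 1), ∑ j : Fin (p + 1),
            codeg G (fun i => x (j.succAbove i)) := Finset.sum_comm
      _ ≤ ∑ x ∈ cliqueTuples G (p + 1), (Fintype.card V + p * codeg G x) :=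
          Finset.sum_le_sum fun x _ => sum_codeg_le G x
      _ = _ := by
          rw [Finset.sum_add_distrib, ← Finset.mul_sum, ← card_cliqueTuples_succ]
          simp [mul_comm]
  calc _ ≤ (p + 1) * ((cliqueTuples G p).card * ∑ x ∈ cliqueTuples G p, codeg G x ^ 2) := by
        gcongr
    _ = (cliqueTuples G p).card * ((p + 1) * ∑ x ∈ cliqueTuples G p, codeg G x ^ 2) := by ring
    _ ≤ _ := by gcongr

/-! ### Boxes in dense sets of tuples -/

lemma card_not_injective_le (V : Type*) [Fintype V] [DecidableEq V] (q : ℕ) :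
    (Finset.card {y : Fin (q + 1) → V | ¬ Function.Injective y}) ≤
      (q + 1) ^ 2 * Fintype.card V ^ q := by
  classical
  have hsub : ({y : Fin (q + 1) → V | ¬ Function.Injective y} : Finset _) ⊆
      (Finset.univ : Finset (Fin (q + 1) × Fin (q + 1))).biUnion
        (fun ij => {y : Fin (q + 1) → V | ij.1 ≠ ij.2 ∧ y ij.1 = y ij.2}) := by
    intro y hy
    replace hy : ¬ Function.Injective y := by simpa using hy
    unfold Function.Injective at hy
    push Not at hy
    obtain ⟨a, b, h, hab⟩ := hy
    simp only [Finset.mem_biUnion, Finset.mem_univ, true_and, Finset.mem_filter]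
    exact ⟨(a, b), hab, h⟩
  refine (Finset.card_le_card hsub).trans ((Finset.card_biUnion_le_card_mul _ _
    (Fintype.card V ^ q) ?_).trans (by simp [sq]))
  rintro ⟨a, b⟩ -
  by_cases hab : a = b
  · simp [hab]
  have : Fintype.card V ^ q = (Finset.univ : Finset (Fin q → V)).card := by simp
  rw [this]
  -- the coordinate `b` is determined by the coordinate `a`
  refine Finset.card_le_card_of_injOn (fun y i => y (b.succAbove i)) (fun _ _ => by simp) ?_
  intro y hy y' hy' h
  simp only [Finset.coe_filter, Finset.mem_univ, true_and, Set.mem_ofPred_eq] at hy hy'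
  have h' : ∀ i, i ≠ b → y i = y' i := by
    intro i hi
    obtain ⟨i', rfl⟩ := Fin.exists_succAbove_eq hi
    exact congrFun h i'
  funext i
  by_cases hi : i = b
  · rw [hi, ← hy.2, ← hy'.2]; exact h' a hab
  · exact h' i hi

open Classical in
/-- The **box lemma** of Erdős: for `n = card V` large, a set of at least `c * n ^ p` tuples
contains a product of the ranges of `p` injective families, each of size `q + 1`. By convexity, some
injective family `y` of first coordinates has at least `c ^ (q + 1) / 2 * n ^ p` tuples which
extend all of its entries into `S`; induction on `p` is applied to these. -/
lemma exists_box (q p : ℕ) : ∀ c : ℝ, 0 < c → ∃ n₀ : ℕ, ∀ {V : Type} [Fintype V]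
    (S : Finset (Fin p → V)), n₀ ≤ Fintype.card V → c * (Fintype.card V : ℝ) ^ p ≤ S.card →
      ∃ A : Fin p → Fin (q + 1) → V, (∀ i, Function.Injective (A i)) ∧
        ∀ f : Fin p → Fin (q + 1), (fun i => A i (f i)) ∈ S := by
  induction p with
  | zero =>
    intro c hc
    refine ⟨0, fun {V} _ S _ hS => ⟨fun i => i.elim0, fun i => i.elim0, fun f => ?_⟩⟩
    have : 0 < S.card := by
      have : (0 : ℝ) < S.card := lt_of_lt_of_le (by simpa using hc) hS
      exact_mod_cast this
    obtain ⟨x, hx⟩ := Finset.card_pos.mp this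
    convert hx
  | succ p ih =>
    intro c hc
    obtain ⟨n₁, h₁⟩ := ih (c ^ (q + 1) / 2) (by positivity)
    obtain ⟨n₂, h₂⟩ := exists_nat_gt (2 * ((q + 1 : ℕ) : ℝ) ^ 2 / c ^ (q + 1))
    refine ⟨max n₁ (n₂ + 1), fun {V} _ S hn hS => ?_⟩
    set n := Fintype.card V with hn_def
    have hn1 : n₁ ≤ n := le_trans (le_max_left _ _) hn
    have hn2 : n₂ + 1 ≤ n := le_trans (le_max_right _ _) hn
    have hn0 : (0 : ℝ) < n := by
      have : 0 < n := by omega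
      exact_mod_cast this
    -- `g y` is the set of tuples extending every entry of `y` into `S`
    let g : (Fin (q + 1) → V) → Finset (Fin p → V) :=
      fun y => {x | ∀ j, (Fin.cons (y j) x : Fin (p + 1) → V) ∈ S}
    let d : (Fin p → V) → Finset V := fun x => {a | (Fin.cons a x : Fin (p + 1) → V) ∈ S}
    have hd : ∑ x, (d x).card = S.card := by
      have : S.card = ∑ z : Fin (p + 1) → V, if z ∈ S then 1 else 0 := by simp
      rw [this, ← (Fin.consEquiv (fun _ => V)).sum_comp, Fintype.sum_prod_type, Finset.sum_comm]
      simp only [d, Fin.consEquiv, Equiv.coe_fn_mk, Finset.card_filter]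
      rfl
    have hg : ∑ y, (g y).card = ∑ x, (d x).card ^ (q + 1) := by
      simp only [g, Finset.card_filter]
      rw [Finset.sum_comm]
      refine Finset.sum_congr rfl fun x _ => ?_
      rw [← Finset.card_filter]
      have : ({y : Fin (q + 1) → V | ∀ j, (Fin.cons (y j) x : Fin (p + 1) → V) ∈ S} : Finset _)
          = Fintype.piFinset (fun _ => d x) := by
        ext y; simp [d]
      rw [this]; simp
    have hlow : c ^ (q + 1) * (n : ℝ) ^ (q + 1) * (n : ℝ) ^ p ≤ ∑ y, ((g y).card : ℝ) := by
      have hj := pow_sum_div_card_le_sum_pow (s := (Finset.univ : Finset (Fin p → V)))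
        (f := fun x => ((d x).card : ℝ)) (fun _ _ => Nat.cast_nonneg _) q
      have e1 : ∑ x, ((d x).card : ℝ) = S.card := by exact_mod_cast hd
      have e2 : ∑ y, ((g y).card : ℝ) = ∑ x, ((d x).card : ℝ) ^ (q + 1) := by exact_mod_cast hg
      rw [e1] at hj
      rw [e2]
      refine le_trans ?_ hj
      have e3 : ((Finset.univ : Finset (Fin p → V)).card : ℝ) = (n : ℝ) ^ p := by simp [n]
      rw [e3, le_div_iff₀ (by positivity)]
      calc c ^ (q + 1) * (n : ℝ) ^ (q + 1) * (n : ℝ) ^ p * ((n : ℝ) ^ p) ^ q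
          = (c * (n : ℝ) ^ (p + 1)) ^ (q + 1) := by ring
        _ ≤ _ := by gcongr
    by_cases hex : ∃ y : Fin (q + 1) → V, Function.Injective y ∧
        c ^ (q + 1) / 2 * (n : ℝ) ^ p ≤ (g y).card
    · obtain ⟨y, hy, hcard⟩ := hex
      obtain ⟨A, hA, hAS⟩ := h₁ (g y) hn1 hcard
      refine ⟨Fin.cons y A, fun i => ?_, fun f => ?_⟩
      · induction i using Fin.cases with
        | zero => simpa using hy
        | succ i => simpa using hA i
      · have := hAS (fun i => f i.succ)
        simp only [g, Finset.mem_filter, Finset.mem_univ, true_and] at this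
        convert this (f 0) using 1
        funext i
        induction i using Fin.cases with
        | zero => simp
        | succ i => simp
    · exfalso
      push Not at hex
      -- non-injective families are too few, `O(n ^ q)` of them, to carry half of the total
      have hup : ∑ y, ((g y).card : ℝ) ≤ (n : ℝ) ^ (q + 1) * (c ^ (q + 1) / 2 * (n : ℝ) ^ p) +
          ((q + 1 : ℕ) : ℝ) ^ 2 * (n : ℝ) ^ q * (n : ℝ) ^ p := by
        rw [← Finset.sum_filter_add_sum_filter_not _ (fun y => Function.Injective y)]
        refine add_le_add ?_ ?_
        · refine (Finset.sum_le_card_nsmul _ _ (c ^ (q + 1) / 2 * (n : ℝ) ^ p) ?_).trans ?_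
          · intro y hy
            exact (hex y (by simpa using hy)).le
          · rw [nsmul_eq_mul]
            gcongr
            have := Finset.card_le_univ
              ({y : Fin (q + 1) → V | Function.Injective y} : Finset _)
            simp only [Fintype.card_fun, Fintype.card_fin] at this
            exact_mod_cast this
        · refine (Finset.sum_le_card_nsmul _ _ ((n : ℝ) ^ p) ?_).trans ?_
          · intro y hy
            have := Finset.card_le_univ (g y)
            simp only [Fintype.card_fun, Fintype.card_fin] at this
            exact_mod_cast this
          · rw [nsmul_eq_mul]
            gcongr
            exact_mod_cast card_not_injective_le V q
      have hc' : (0 : ℝ) < c ^ (q + 1) := by positivity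
      have h3 : 2 * ((q + 1 : ℕ) : ℝ) ^ 2 < n * c ^ (q + 1) := by
        rw [div_lt_iff₀ hc'] at h₂
        have : (n₂ : ℝ) ≤ n := by exact_mod_cast (by omega : n₂ ≤ n)
        nlinarith
      have h4 : (0 : ℝ) < (n : ℝ) ^ q * (n : ℝ) ^ p := by positivity
      have h5 := hlow.trans hup
      rw [pow_succ (n : ℝ) q] at h5
      nlinarith [mul_lt_mul_of_pos_right h3 h4]

/-! ### Embedding coloured graphs into boxes -/

lemma isCliqueTuple_of_mem {V : Type*} [Fintype V] {G : SimpleGraph V} {s : ℕ} {x : Fin s → V}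
    (h : x ∈ cliqueTuples G s) : IsCliqueTuple G x := by
  simpa [cliqueTuples] using h

/-- A box of ordered `p`-cliques is a complete `p`-partite graph, so it contains every
`p`-colourable graph with at most `q` vertices: colour classes are sent to distinct parts. -/
lemma exists_injective_hom_of_box {V W : Type*} [Finite W] {G : SimpleGraph V}
    {H : SimpleGraph W} {p q : ℕ} (C : H.Coloring (Fin p)) (hq : Nat.card W ≤ q)
    (A : Fin p → Fin q → V) (hA : ∀ i, Function.Injective (A i))
    (hAG : ∀ f : Fin p → Fin q, IsCliqueTuple G (fun i => A i (f i))) :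
    ∃ φ : W → V, Function.Injective φ ∧ ∀ a b, H.Adj a b → G.Adj (φ a) (φ b) := by
  let e : W → Fin q := fun w => Fin.castLE hq (Finite.equivFin W w)
  have he : Function.Injective e :=
    (Fin.castLE_injective hq).comp (Finite.equivFin W).injective
  have hadj : ∀ a b, C a ≠ C b → G.Adj (A (C a) (e a)) (A (C b) (e b)) := by
    intro a b hab
    have := hAG (fun i => if i = C a then e a else e b) (C a) (C b) hab
    simpa [hab.symm] using this
  refine ⟨fun w => A (C w) (e w), fun a b hab => ?_, fun a b hab => hadj a b (C.valid hab)⟩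
  by_cases hc : C a = C b
  · dsimp only at hab
    rw [hc] at hab
    exact he (hA _ hab)
  · exact absurd hab (hadj a b hc).ne

lemma not_hFree_of_hom {V W : Type*} {G : SimpleGraph V} {H : SimpleGraph W} (φ : W → V)
    (hφ : Function.Injective φ) (h : ∀ a b, H.Adj a b → G.Adj (φ a) (φ b)) : ¬ HFree G H := by
  intro hfree
  let c : Copy H G := ⟨⟨φ, fun {a b} => h a b⟩, hφ⟩
  exact hfree c.toSubgraph ⟨c.isoToSubgraph.symm⟩

/-- A copy of `H - v` in the neighbourhood of `u` extends to a copy of `H` by `v ↦ u`. -/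
lemma not_hFree_of_neighborSet {V W : Type*} {G : SimpleGraph V} {H : SimpleGraph W} (v : W)
    (u : V) (φ : ({v}ᶜ : Set W) → G.neighborSet u) (hφ : Function.Injective φ)
    (h : ∀ a b, (H.induce ({v}ᶜ : Set W)).Adj a b →
      (G.induce (G.neighborSet u)).Adj (φ a) (φ b)) : ¬ HFree G H := by
  classical
  have hu : ∀ a, G.Adj u (φ a) := fun a => (φ a).2
  refine not_hFree_of_hom (fun w => if hw : w = v then u else (φ ⟨w, hw⟩ : V)) ?_ ?_
  · intro a b hab
    by_cases ha : a = v <;> by_cases hb : b = v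
    · rw [ha, hb]
    · simp only [ha, hb, dite_true, dite_false] at hab
      exact absurd hab (hu _).ne
    · simp only [ha, hb, dite_true, dite_false] at hab
      exact absurd hab (hu _).ne'
    · simp only [ha, hb, dite_false] at hab
      exact congrArg Subtype.val (hφ (Subtype.ext hab))
  · intro a b hab
    by_cases ha : a = v <;> by_cases hb : b = v
    · rw [ha, hb] at hab
      exact absurd rfl hab.ne
    · simpa [ha, hb] using hu _
    · simpa [ha, hb] using (hu _).symm
    · simpa [ha, hb] using h ⟨a, ha⟩ ⟨b, hb⟩ hab

/-! ### Counting copies of complete graphs through a vertex -/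

lemma adj_of_iso_complete {V : Type*} {G : SimpleGraph V} {F : G.Subgraph} {m : ℕ}
    (e : F.coe ≃g completeGraph (Fin m)) {a b : V} :
    F.Adj a b ↔ a ∈ F.verts ∧ b ∈ F.verts ∧ a ≠ b := by
  constructor
  · intro h
    exact ⟨F.edge_vert h, F.edge_vert h.symm, h.ne⟩
  · rintro ⟨ha, hb, hab⟩
    have h : (completeGraph (Fin m)).Adj (e ⟨a, ha⟩) (e ⟨b, hb⟩) := by
      simpa [completeGraph] using hab
    exact e.map_adj_iff.mp h

/-- A copy of `K_{s+1}` through `u` is determined by its other `s` vertices, which form a clique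
in the neighbourhood of `u` and can be ordered in `s!` ways. -/
lemma ncard_copies_mul_factorial_le {V : Type*} [Fintype V] (G : SimpleGraph V) (u : V)
    [Fintype (G.neighborSet u)] (s : ℕ) :
    Set.ncard {F : G.Subgraph | u ∈ F.verts ∧ Nonempty (F.coe ≃g completeGraph (Fin (s + 1)))}
      * s.factorial ≤ (cliqueTuples (G.induce (G.neighborSet u)) s).card := by
  classical
  set X := {F : G.Subgraph | u ∈ F.verts ∧ Nonempty (F.coe ≃g completeGraph (Fin (s + 1)))}
  have iso : ∀ F : X, F.1.coe ≃g completeGraph (Fin (s + 1)) := fun F => F.2.2.some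
  have hcard : ∀ F : X, Nat.card {a : G.neighborSet u // (a : V) ∈ F.1.verts} = s := by
    intro F
    have h1 : Nat.card F.1.verts = s + 1 := by
      rw [Nat.card_congr (iso F).toEquiv]; simp
    have e : {a : G.neighborSet u // (a : V) ∈ F.1.verts} ≃ (F.1.verts \ {u} : Set V) :=
      { toFun := fun a => ⟨a.1, a.2, fun h => (G.ne_of_adj a.1.2) (by simpa using h.symm)⟩
        invFun := fun a => ⟨⟨a.1, F.1.adj_sub ((adj_of_iso_complete (iso F)).mpr
          ⟨F.2.1, a.2.1, fun h => a.2.2 h.symm⟩)⟩, a.2.1⟩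
        left_inv := fun a => rfl
        right_inv := fun a => rfl }
    rw [Nat.card_congr e, Nat.card_coe_set_eq, Set.ncard_sdiff_singleton_of_mem F.2.1,
      ← Nat.card_coe_set_eq, h1]
    rfl
  have eq : ∀ F : X, Fin s ≃ {a : G.neighborSet u // (a : V) ∈ F.1.verts} := fun F =>
    (finCongr (hcard F).symm).trans (Finite.equivFin _).symm
  let Φ : X × Equiv.Perm (Fin s) → (Fin s → G.neighborSet u) := fun Fπ i => (eq Fπ.1 (Fπ.2 i)).1
  have hmem : ∀ z, Φ z ∈ cliqueTuples (G.induce (G.neighborSet u)) s := by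
    rintro ⟨F, π⟩
    simp only [cliqueTuples, Finset.mem_filter, Finset.mem_univ, true_and]
    intro i j hij
    refine F.1.adj_sub ((adj_of_iso_complete (iso F)).mpr ⟨(eq F (π i)).2, (eq F (π j)).2, ?_⟩)
    intro h
    exact hij (π.injective ((eq F).injective (Subtype.ext (Subtype.ext h))))
  -- the vertex set of the copy is recovered as `u` together with the entries of the tuple
  have hverts : ∀ (F : X) (π : Equiv.Perm (Fin s)) (a : V),
      a ∈ F.1.verts ↔ a = u ∨ ∃ i, (Φ (F, π) i : V) = a := by
    intro F π a
    constructor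
    · intro ha
      by_cases hau : a = u
      · exact Or.inl hau
      · right
        have hadj : G.Adj u a := F.1.adj_sub ((adj_of_iso_complete (iso F)).mpr
          ⟨F.2.1, ha, fun h => hau h.symm⟩)
        refine ⟨π.symm ((eq F).symm ⟨⟨a, hadj⟩, ha⟩), ?_⟩
        simp [Φ]
    · rintro (rfl | ⟨i, rfl⟩)
      · exact F.2.1
      · exact (eq F (π i)).2
  have hinj : Function.Injective Φ := by
    rintro ⟨F, π⟩ ⟨F', π'⟩ h
    have hv : F.1.verts = F'.1.verts := by
      ext a
      rw [hverts F π, hverts F' π', h]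
    have hF : F = F' := by
      refine Subtype.ext (Subgraph.ext hv ?_)
      funext a b
      rw [adj_of_iso_complete (iso F), adj_of_iso_complete (iso F'), hv]
    subst hF
    refine Prod.ext rfl (Equiv.ext fun i => ?_)
    exact (eq F).injective (Subtype.ext (congrFun h i))
  have hX : Nat.card (X × Equiv.Perm (Fin s)) = X.ncard * s.factorial := by
    rw [Nat.card_prod, Nat.card_coe_set_eq, Nat.card_perm, Nat.card_fin]
  rw [← hX, ← Nat.card_eq_finsetCard]
  exact Nat.card_le_card_of_injective (fun z => (⟨Φ z, hmem z⟩ : cliqueTuples _ s))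
    (fun z z' h => hinj (congrArg Subtype.val h))

/-! ### The bound -/

/-- Let `H` be a graph with `χ(H) = k`, let `v` be a vertex of `H` with `χ(H - v) = k - 1`, and
let `2 ≤ m < k`. For every `η > 0` there is `d₀` such that for every `H`-free graph `G` and
every vertex `u` of `G` of degree `d > d₀`, the number of copies of `K_m` of `G` containing `u`
is at most `(1 + η) C(k-2, m-1) (d/(k-2))^{m-1}`. -/
theorem clique_copies_through_vertex_bound {W : Type} [Fintype W] (H : SimpleGraph W)
    (k : ℕ) (hchr : H.chromaticNumber = k) (v : W)
    (hv : (H.induce ({v}ᶜ : Set W)).chromaticNumber = (k - 1 : ℕ))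
    (m : ℕ) (hm : 2 ≤ m) (hmk : m < k) :
    ∀ η : ℝ, 0 < η → ∃ d₀ : ℕ,
      ∀ {V : Type} [Fintype V] (G : SimpleGraph V), HFree G H →
        ∀ u : V, d₀ < (G.neighborSet u).ncard →
          (Set.ncard {F : G.Subgraph |
              u ∈ F.verts ∧ Nonempty (F.coe ≃g completeGraph (Fin m))} : ℝ)
            ≤ (1 + η) * ((k - 2).choose (m - 1)) *
              (((G.neighborSet u).ncard : ℝ) / ((k : ℝ) - 2)) ^ (m - 1) := by
  intro η hη
  obtain ⟨r, rfl⟩ : ∃ r, k = r + 2 := ⟨k - 2, by omega⟩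
  obtain ⟨s, rfl⟩ : ∃ s, m = s + 1 := ⟨m - 1, by omega⟩
  have hr : 1 ≤ r := by omega
  have hsr : s ≤ r := by omega
  have hr0 : (0 : ℝ) < r := by exact_mod_cast hr
  obtain ⟨C⟩ : (H.induce ({v}ᶜ : Set W)).Colorable (r + 1) :=
    chromaticNumber_le_iff_colorable.mp hv.le
  have hdf : 0 < r.descFactorial s := Nat.pos_of_ne_zero (by
    rw [Ne, Nat.descFactorial_eq_zero_iff_lt]; omega)
  have hτ : (0 : ℝ) < (r.descFactorial s : ℝ) / r ^ s := by
    have : (0 : ℝ) < r.descFactorial s := by exact_mod_cast hdf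
    positivity
  obtain ⟨δ, hδ, hdens⟩ := density_bound r hr s hsr (η * ((r.descFactorial s : ℝ) / r ^ s))
    (by positivity)
  obtain ⟨n₀, hbox⟩ := exists_box (Nat.card ({v}ᶜ : Set W)) (r + 1) δ hδ
  refine ⟨n₀, fun {V} _ G hfree u hu => ?_⟩
  classical
  set U := G.neighborSet u
  have hn : Fintype.card U = U.ncard := by rw [← Nat.card_coe_set_eq, Nat.card_eq_fintype_card]
  set n := U.ncard
  have hn0 : (0 : ℝ) < n := by exact_mod_cast (by omega : 0 < n)
  let G' : SimpleGraph U := G.induce U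
  -- otherwise the box lemma yields a copy of `H - v` in the neighbourhood of `u`
  have hsmall : ((cliqueTuples G' (r + 1)).card : ℝ) < δ * (n : ℝ) ^ (r + 1) := by
    by_contra! hcon
    obtain ⟨A, hA, hAG⟩ := hbox (cliqueTuples G' (r + 1)) (by omega) (by rw [hn]; exact hcon)
    obtain ⟨φ, hφ, hφG⟩ := exists_injective_hom_of_box C (Nat.le_succ _) A hA
      (fun f => isCliqueTuple_of_mem (hAG f))
    exact not_hFree_of_neighborSet v u φ hφ hφG hfree
  have ht := hdens (fun i => ((cliqueTuples G' i).card : ℝ) / (n : ℝ) ^ i)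
    (fun i => by positivity)
    (fun i => by
      rw [div_le_one (by positivity)]
      have := Finset.card_le_univ (cliqueTuples G' i)
      simp only [Fintype.card_fun, Fintype.card_fin, hn] at this
      exact_mod_cast this)
    (fun p => by
      have h := moon_moser G' p
      rw [hn] at h
      have h' : ((p : ℝ) + 1) * ((cliqueTuples G' (p + 1)).card : ℝ) ^ 2 ≤
          (cliqueTuples G' p).card * (n * (cliqueTuples G' (p + 1)).card
            + p * (cliqueTuples G' (p + 2)).card) := by exact_mod_cast h
      have h'' := div_le_div_of_nonneg_right h' (by positivity : (0 : ℝ) ≤ (n : ℝ) ^ (2 * p + 2))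
      refine (le_of_eq ?_).trans (h''.trans (le_of_eq ?_))
      · rw [div_pow, ← pow_mul, mul_div_assoc]
        ring
      · field_simp
        ring)
    (by
      rw [div_le_iff₀ (by positivity)]
      exact hsmall.le)
  rw [div_le_iff₀ (by positivity)] at ht
  have hcopies := ncard_copies_mul_factorial_le G u s
  have hcopies' : (Set.ncard {F : G.Subgraph |
      u ∈ F.verts ∧ Nonempty (F.coe ≃g completeGraph (Fin (s + 1)))} : ℝ) * s.factorial
      ≤ ((cliqueTuples G' s).card : ℝ) := by exact_mod_cast hcopies
  have hfac : (0 : ℝ) < s.factorial := by exact_mod_cast s.factorial_pos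
  refine le_of_mul_le_mul_right (hcopies'.trans (ht.trans (le_of_eq ?_))) hfac
  have hkr : (((r + 2 : ℕ) : ℝ) - 2) = r := by push_cast; ring
  have hd : (r.descFactorial s : ℝ) = s.factorial * r.choose s := by
    exact_mod_cast Nat.descFactorial_eq_factorial_mul_choose r s
  rw [hkr, hd]
  simp only [Nat.add_sub_cancel, div_pow]
  field_simp
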